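/- Let D = 2r be an even integer with r ≥ 1 and let n ≥ D+1 be an integer. Then σ̃_{2,max}(D,n) = 2/D = 1/r. -/

import Mathlib

open scoped BigOperators
open Classical

/-- The Dirichlet energy of a function on a finite graph: `∑_{edges xy} (f x - f y)^2`. -/
noncomputable def dirichletEnergy {V : Type*} [Fintype V] (G : SimpleGraph V) (f : V → ℝ) : ℝ :=
  (∑ x : V, ∑ y : V, if G.Adj x y then (f x - f y) ^ 2 else 0) / 2

/-- The `k`-th Steklov (Dirichlet-to-Neumann) eigenvalue (1-indexed, in increasing order
with multiplicity) of a finite graph `G` with boundary `B`, via the variational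
(Courant–Fischer) characterization. -/
noncomputable def steklovEig {V : Type*} [Fintype V] (G : SimpleGraph V) (B : Finset V)
    (k : ℕ) : ℝ :=
  sInf { t : ℝ | ∃ F : Submodule ℝ (V → ℝ),
    Module.finrank ℝ (F.map (LinearMap.funLeft ℝ ℝ (fun x : {v // v ∈ B} => (x : V)))) = k ∧
    ∀ f ∈ F, dirichletEnergy G f ≤ t * ∑ x ∈ B, (f x) ^ 2 }

/-- The set of leaves (vertices of degree 1) of a finite graph, as a `Finset`. -/
noncomputable def leavesFinset {V : Type*} [Fintype V] (G : SimpleGraph V) : Finset V :=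
  Finset.univ.filter fun v => G.degree v = 1

/-- `σ_{k,max}(b,n)`: the maximum of the `k`-th Steklov eigenvalue over all trees with
`b` leaves (as boundary) and `n` vertices. -/
noncomputable def sigmaMax (k b n : ℕ) : ℝ :=
  sSup { s : ℝ | ∃ G : SimpleGraph (Fin n), G.IsTree ∧ (leavesFinset G).card = b ∧
    s = steklovEig G (leavesFinset G) k }

/-- `σ̃_{2,max}(D,n)`: the maximum of the first nontrivial Steklov eigenvalue over all
trees with diameter `D` and `n` vertices. -/
noncomputable def sigmaTildeMax (D n : ℕ) : ℝ :=
  sSup { s : ℝ | ∃ G : SimpleGraph (Fin n), G.IsTree ∧ G.diam = D ∧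
    s = steklovEig G (leavesFinset G) 2 }


lemma leaf_of_diam {V : Type*} [Fintype V] {G : SimpleGraph V} (hG : G.IsTree) {u v : V}
    (huv : u ≠ v) (hd : ∀ y, G.dist y v ≤ G.dist u v) : u ∈ leavesFinset G := by
  obtain ⟨p, hp, hpl⟩ := (hG.connected u v).exists_path_of_dist
  have hnil : ¬ p.Nil := SimpleGraph.Walk.not_nil_of_ne huv
  unfold leavesFinset
  rw [Finset.mem_filter]
  refine ⟨Finset.mem_univ _, ?_⟩
  rw [SimpleGraph.degree_eq_one_iff_existsUnique_adj]
  refine ⟨p.snd, p.adj_snd hnil, fun y hy => ?_⟩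
  apply hG.isAcyclic.eq_snd_of_adj_start hp hy
  by_contra hys
  have hq : (p.cons hy.symm).IsPath := hp.cons hys
  obtain ⟨q, hq1, hq2⟩ := (hG.connected y v).exists_path_of_dist
  have := (hG.isAcyclic.subsingleton_path y v).elim ⟨q, hq1⟩ ⟨_, hq⟩
  have h2 : q = p.cons hy.symm := congrArg Subtype.val this
  have := hd y
  rw [← hq2, h2, SimpleGraph.Walk.length_cons] at this
  omega

/-- indicator of the component of `a` after deleting the edge `e` -/
noncomputable def chi {V : Type*} (G : SimpleGraph V) (a : V) (e : Sym2 V) (x : V) : ℝ :=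
  if (G.deleteEdges {e}).Reachable a x then 1 else 0

lemma chi_self {V : Type*} (G : SimpleGraph V) (a : V) (e : Sym2 V) : chi G a e a = 1 := by
  simp [chi]

lemma chi_end {V : Type*} {G : SimpleGraph V} (hG : G.IsAcyclic) {a b : V} {p : G.Walk a b}
    (hp : p.IsPath) {e : Sym2 V} (he : e ∈ p.edges) : chi G a e b = 0 := by
  unfold chi
  rw [if_neg]
  intro h
  obtain ⟨q, hq⟩ := h.exists_isPath
  have hle : G.deleteEdges {e} ≤ G := SimpleGraph.deleteEdges_le _
  have := (hG.subsingleton_path a b).elim ⟨p, hp⟩ ⟨q.mapLe hle, hq.mapLe hle⟩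
  have h2 : p = q.mapLe hle := congrArg Subtype.val this
  rw [h2, SimpleGraph.Walk.edges_mapLe_eq_edges] at he
  have := q.edges_subset_edgeSet he
  simp at this

lemma chi_eq {V : Type*} {G : SimpleGraph V} {a x y : V} {e : Sym2 V} (h : G.Adj x y)
    (he : e ≠ s(x, y)) : chi G a e x - chi G a e y = 0 := by
  have hadj : (G.deleteEdges {e}).Adj x y := by
    rw [SimpleGraph.deleteEdges_adj]; exact ⟨h, fun h => he (by simpa using h.symm)⟩
  have : (G.deleteEdges {e}).Reachable a x ↔ (G.deleteEdges {e}).Reachable a y :=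
    ⟨fun h => h.trans hadj.reachable, fun h => h.trans hadj.symm.reachable⟩
  simp [chi, this]

lemma chi_sq_le {V : Type*} (G : SimpleGraph V) (a x y : V) (e : Sym2 V) :
    (chi G a e x - chi G a e y) ^ 2 ≤ 1 := by
  unfold chi; split_ifs <;> norm_num

lemma chi_sum {V : Type*} {G : SimpleGraph V} {a x y : V} (h : G.Adj x y) (S : Finset (Sym2 V)) :
    ∑ e ∈ S, chi G a e x - ∑ e ∈ S, chi G a e y =
      if s(x, y) ∈ S then chi G a s(x, y) x - chi G a s(x, y) y else 0 := by
  rw [← Finset.sum_sub_distrib]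
  split_ifs with hs
  · exact Finset.sum_eq_single_of_mem _ hs (fun e _ he => chi_eq h he)
  · exact Finset.sum_eq_zero (fun e he => chi_eq h (fun h' => hs (h' ▸ he)))

lemma sum_edge {V : Type*} [Fintype V] (S : Finset (Sym2 V)) :
    ∑ x : V, ∑ y : V, (if s(x, y) ∈ S then (1 : ℝ) else 0) ≤ 2 * S.card := by
  have h1 : ∀ x y : V, (if s(x, y) ∈ S then (1 : ℝ) else 0)
      = ∑ e ∈ S, if s(x, y) = e then 1 else 0 := by
    intro x y; simp
  have h2 : ∀ e : Sym2 V, ∑ x : V, ∑ y : V, (if s(x, y) = e then (1 : ℝ) else 0) ≤ 2 := by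
    intro e
    induction e with
    | _ a b =>
    rw [← Fintype.sum_prod_type' (f := fun x y => if s(x, y) = s(a, b) then (1 : ℝ) else 0)]
    rw [Finset.sum_boole]
    have : (Finset.univ.filter fun z : V × V => s(z.1, z.2) = s(a, b)) ⊆ {(a, b), (b, a)} := by
      intro z hz
      obtain ⟨z1, z2⟩ := z
      simpa using hz
    have := (Finset.card_le_card this).trans Finset.card_le_two
    exact_mod_cast this
  calc _ = ∑ e ∈ S, ∑ x : V, ∑ y : V, (if s(x, y) = e then (1 : ℝ) else 0) := by
        simp_rw [h1]
        rw [Finset.sum_comm]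
        rw [Finset.sum_comm' (t' := Finset.univ) (s' := fun _ => S) (by simp)]
        refine Eq.symm ?_
        rw [Finset.sum_comm]
        simp_rw [Finset.sum_comm (s := S)]
        rw [Finset.sum_comm]
        
    _ ≤ ∑ e ∈ S, 2 := Finset.sum_le_sum fun e _ => h2 e
    _ = _ := by simp [mul_comm]

lemma steklov_set_mem {V : Type*} [Fintype V] {G : SimpleGraph V} (hG : G.IsTree) {r : ℕ}
    (hr : 1 ≤ r) {u v : V} (huv : G.dist u v = 2 * r) (hu : u ∈ leavesFinset G)
    (hv : v ∈ leavesFinset G) :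
    ∃ F : Submodule ℝ (V → ℝ),
    Module.finrank ℝ (F.map (LinearMap.funLeft ℝ ℝ
      (fun x : {v // v ∈ leavesFinset G} => (x : V)))) = 2 ∧
    ∀ f ∈ F, dirichletEnergy G f ≤ (1 / (r : ℝ)) * ∑ x ∈ leavesFinset G, (f x) ^ 2 := by
  have hne : u ≠ v := by rintro rfl; simp at huv; omega
  have hr0 : (0 : ℝ) < r := by exact_mod_cast hr
  obtain ⟨p, hp, hpl⟩ := (hG.connected u v).exists_path_of_dist
  have hnd : p.edges.Nodup := hp.isTrail.edges_nodup
  have hlen : p.edges.length = 2 * r := by rw [SimpleGraph.Walk.length_edges, hpl, huv]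
  set S1 : Finset (Sym2 V) := (p.edges.take r).toFinset with hS1
  set S2 : Finset (Sym2 V) := (p.edges.drop r).toFinset with hS2
  have c1 : S1.card = r := by
    rw [hS1, List.toFinset_card_of_nodup (hnd.sublist (List.take_sublist _ _))]
    simp; omega
  have c2 : S2.card = r := by
    rw [hS2, List.toFinset_card_of_nodup (hnd.sublist (List.drop_sublist _ _))]
    simp; omega
  have m1 : ∀ e ∈ S1, e ∈ p.edges := fun e he => List.mem_of_mem_take (List.mem_toFinset.1 he)
  have m2 : ∀ e ∈ S2, e ∈ p.edges := fun e he => List.mem_of_mem_drop (List.mem_toFinset.1 he)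
  have hdisj : ∀ e ∈ S1, e ∉ S2 := by
    intro e h1 h2
    have h := hnd
    rw [← List.take_append_drop r p.edges] at h
    exact List.disjoint_of_nodup_append h (List.mem_toFinset.1 h1) (List.mem_toFinset.1 h2)
  set f1 : V → ℝ := fun x => ∑ e ∈ S1, chi G u e x with hf1
  set f2 : V → ℝ := fun x => r - ∑ e ∈ S2, chi G u e x with hf2
  have f1u : f1 u = r := by simp [hf1, chi_self, c1]
  have f2u : f2 u = 0 := by simp [hf2, chi_self, c2]
  have f1v : f1 v = 0 := Finset.sum_eq_zero fun e he => chi_end hG.isAcyclic hp (m1 e he)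
  have f2v : f2 v = r := by
    have : ∑ e ∈ S2, chi G u e v = 0 :=
      Finset.sum_eq_zero fun e he => chi_end hG.isAcyclic hp (m2 e he)
    simp [hf2, this]
  refine ⟨Submodule.span ℝ (Set.range ![f1, f2]), ?_, ?_⟩
  · rw [Submodule.map_span, ← Set.range_comp, finrank_span_eq_card]
    · simp
    · rw [Fintype.linearIndependent_iff]
      intro g hg
      have hgu := congrFun hg ⟨u, hu⟩
      have hgv := congrFun hg ⟨v, hv⟩
      simp [Fin.sum_univ_two, LinearMap.funLeft_apply, f1u, f2u, f1v, f2v, hr0.ne'] at hgu hgv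
      intro i
      fin_cases i <;> simp [hgu, hgv]
  · intro f hf
    rw [Matrix.range_cons, Matrix.range_cons, Matrix.range_empty, Set.union_empty,
      Set.singleton_union, Submodule.mem_span_pair] at hf
    obtain ⟨a, b, rfl⟩ := hf
    have hB : (r : ℝ) ^ 2 * (a ^ 2 + b ^ 2) ≤
        ∑ x ∈ leavesFinset G, ((a • f1 + b • f2) x) ^ 2 := by
      have hsub : ({u, v} : Finset V) ⊆ leavesFinset G := by
        intro x; simp only [Finset.mem_insert, Finset.mem_singleton]
        rintro (rfl | rfl) <;> assumption
      refine le_trans (le_of_eq ?_) (Finset.sum_le_sum_of_subset_of_nonneg hsub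
        (fun _ _ _ => sq_nonneg _))
      rw [Finset.sum_pair hne]
      simp only [Pi.add_apply, Pi.smul_apply, smul_eq_mul, f1u, f2u, f1v, f2v]
      ring
    have hE : dirichletEnergy G (a • f1 + b • f2) ≤ r * (a ^ 2 + b ^ 2) := by
      unfold dirichletEnergy
      have key : ∀ x y : V, (if G.Adj x y then ((a • f1 + b • f2) x - (a • f1 + b • f2) y) ^ 2
          else 0) ≤ a ^ 2 * (if s(x, y) ∈ S1 then 1 else 0)
            + b ^ 2 * (if s(x, y) ∈ S2 then 1 else 0) := by
        intro x y
        by_cases h : G.Adj x y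
        · rw [if_pos h]
          have e1 : (a • f1 + b • f2) x - (a • f1 + b • f2) y
            = a * (f1 x - f1 y) - b * (∑ e ∈ S2, chi G u e x - ∑ e ∈ S2, chi G u e y) := by
            simp only [Pi.add_apply, Pi.smul_apply, smul_eq_mul, hf2]; ring
          rw [e1, chi_sum h S1, chi_sum h S2]
          have hs := chi_sq_le G u x y s(x, y)
          have ha := mul_le_mul_of_nonneg_left hs (sq_nonneg a)
          have hb := mul_le_mul_of_nonneg_left hs (sq_nonneg b)
          by_cases h1 : s(x, y) ∈ S1
          · have h2 := hdisj _ h1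
            simp only [h1, h2, if_true, if_false]; nlinarith
          · by_cases h2 : s(x, y) ∈ S2
            · simp only [h1, h2, if_true, if_false]; nlinarith
            · simp [h1, h2]
        · rw [if_neg h]; positivity
      have := Finset.sum_le_sum fun x (_ : x ∈ Finset.univ) =>
        Finset.sum_le_sum fun y (_ : y ∈ Finset.univ) => key x y
      simp only [Finset.sum_add_distrib, ← Finset.mul_sum] at this
      have s1 := mul_le_mul_of_nonneg_left (sum_edge S1) (sq_nonneg a)
      have s2 := mul_le_mul_of_nonneg_left (sum_edge S2) (sq_nonneg b)
      rw [c1] at s1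
      rw [c2] at s2
      linarith
    refine hE.trans ?_
    have := mul_le_mul_of_nonneg_left hB (one_div_pos.2 hr0).le
    refine le_trans (le_of_eq ?_) this
    field_simp

lemma exists_test {V : Type*} [Fintype V] {B : Finset V}
    {F : Submodule ℝ (V → ℝ)} (c : V)
    (hF : Module.finrank ℝ (F.map (LinearMap.funLeft ℝ ℝ
      (fun x : {v // v ∈ B} => (x : V)))) = 2) :
    ∃ f ∈ F, f c = 0 ∧ 0 < ∑ x ∈ B, (f x) ^ 2 := by
  set R := LinearMap.funLeft ℝ ℝ (fun x : {v // v ∈ B} => (x : V)) with hR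
  let bs := Module.finBasisOfFinrankEq ℝ (F.map R) hF
  obtain ⟨p0, hp0, e0⟩ := (bs 0).2
  obtain ⟨p1, hp1, e1⟩ := (bs 1).2
  have hli : ∀ a b : ℝ, R (a • p0 + b • p1) = 0 → a = 0 ∧ b = 0 := by
    intro a b h
    have h2 := Fintype.linearIndependent_iff.1 bs.linearIndependent ![a, b] (by
      apply Subtype.ext
      rw [Fin.sum_univ_two]
      simpa [e0, e1] using h)
    exact ⟨h2 0, h2 1⟩
  have hpos : ∀ f : V → ℝ, R f ≠ 0 → 0 < ∑ x ∈ B, (f x) ^ 2 := by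
    intro f hf
    obtain ⟨x, hx⟩ := Function.ne_iff.1 hf
    refine Finset.sum_pos' (fun _ _ => sq_nonneg _) ⟨x.1, x.2, ?_⟩
    have : f x.1 ≠ 0 := hx
    positivity
  by_cases h : p0 c = 0
  · refine ⟨p0, hp0, h, hpos _ fun h0 => ?_⟩
    have := hli 1 0 (by simpa using h0)
    simp at this
  · refine ⟨p1 c • p0 + (-p0 c) • p1, F.add_mem (F.smul_mem _ hp0) (F.smul_mem _ hp1), ?_,
      hpos _ fun h0 => ?_⟩
    · simp; ring
    · have := (hli _ _ h0).2
      exact h (by linarith)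

def par (r i : ℕ) : ℕ := if i = r + 1 ∨ 2 * r < i then 0 else i - 1

lemma par_le (r i : ℕ) : par r i ≤ i - 1 := by unfold par; split_ifs <;> omega

def spider (r n : ℕ) : SimpleGraph (Fin n) where
  Adj x y := x ≠ y ∧ (y.1 = par r x.1 ∨ x.1 = par r y.1)
  symm := ⟨fun _ _ h => ⟨h.1.symm, h.2.symm⟩⟩
  loopless := ⟨fun _ h => h.1 rfl⟩

lemma spider_walk {r n : ℕ} (hr : 1 ≤ r) (hn : 0 < n) (k : ℕ) : ∀ hk : k < n,
    ∃ w : (spider r n).Walk ⟨k, hk⟩ ⟨0, hn⟩, w.length ≤ r ∧ (k ≤ r → w.length = k) ∧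
      (r < k → k ≤ 2 * r → w.length = k - r) ∧ (2 * r < k → w.length = 1) := by
  induction k using Nat.strong_induction_on with
  | _ k ih =>
  intro hk
  by_cases h0 : k = 0
  · subst h0
    exact ⟨SimpleGraph.Walk.nil, by simp⟩
  · have hp := par_le r k
    obtain ⟨w, h1, h2, h3, h4⟩ := ih (par r k) (by omega) (by omega)
    have hadj : (spider r n).Adj ⟨k, hk⟩ ⟨par r k, by omega⟩ :=
      ⟨by simp [Fin.ext_iff]; omega, Or.inl rfl⟩
    refine ⟨SimpleGraph.Walk.cons hadj w, ?_⟩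
    rw [SimpleGraph.Walk.length_cons]
    have hpv : ((k = r + 1 ∨ 2 * r < k) ∧ par r k = 0) ∨
        (¬ (k = r + 1 ∨ 2 * r < k) ∧ par r k = k - 1) := by
      unfold par; split_ifs <;> tauto
    refine ⟨?_, ?_, ?_, ?_⟩ <;> intros <;> omega

lemma spider_connected {r n : ℕ} (hr : 1 ≤ r) (hn : 0 < n) : (spider r n).Connected := by
  rw [SimpleGraph.connected_iff_exists_forall_reachable]
  refine ⟨⟨0, hn⟩, fun x => ?_⟩
  obtain ⟨w, _⟩ := spider_walk hr hn x.1 x.2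
  exact ⟨w.reverse⟩

lemma spider_isTree {r n : ℕ} (hr : 1 ≤ r) (hn : 0 < n) : (spider r n).IsTree := by
  rw [SimpleGraph.isTree_iff_connected_and_card]
  have hc := spider_connected hr hn
  refine ⟨hc, le_antisymm ?_ hc.card_vert_le_card_edgeSet_add_one⟩
  set S : Finset (Sym2 (Fin n)) := ((Finset.univ : Finset (Fin n)).erase ⟨0, hn⟩).image
    (fun x => s(x, ⟨par r x.1, by have := par_le r x.1; omega⟩)) with hS
  have hsub : (spider r n).edgeSet ⊆ (S : Set (Sym2 (Fin n))) := by
    intro e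
    induction e with
    | _ a b =>
    intro h
    have h' : (spider r n).Adj a b := h
    obtain ⟨hne, h1⟩ := h'
    have hne' : a.1 ≠ b.1 := fun h => hne (Fin.ext h)
    rw [hS, Finset.coe_image]
    have hpa := par_le r a
    have hpb := par_le r b
    rcases h1 with h1 | h1
    · refine ⟨a, ?_, ?_⟩
      · simp [Fin.ext_iff]; omega
      · simp [← h1]
    · refine ⟨b, ?_, ?_⟩
      · simp [Fin.ext_iff]; omega
      · simp [← h1, Sym2.eq_swap]
  have h1 := Set.ncard_le_ncard hsub (Finset.finite_toSet _)
  rw [Set.ncard_coe_finset] at h1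
  have h2 : S.card ≤ n - 1 := by
    refine Finset.card_image_le.trans ?_
    simp
  rw [Nat.card_coe_set_eq, Nat.card_eq_fintype_card, Fintype.card_fin]
  omega

def phi (r k : ℕ) : ℤ := if k ≤ r then k else if k ≤ 2 * r then (r : ℤ) - k else 0

lemma spider_lip {r n : ℕ} {x y : Fin n} (w : (spider r n).Walk x y) :
    phi r x.1 - phi r y.1 ≤ w.length := by
  induction w with
  | nil => simp
  | @cons a b c h w ih =>
    rw [SimpleGraph.Walk.length_cons]
    have : phi r a.1 - phi r b.1 ≤ 1 := by
      obtain ⟨_, h | h⟩ := h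
      · rw [h]; unfold phi par; split_ifs <;> omega
      · rw [h]; unfold phi par; split_ifs <;> omega
    push_cast
    linarith

lemma spider_diam {r n : ℕ} (hr : 1 ≤ r) (hn : 2 * r + 1 ≤ n) : (spider r n).diam = 2 * r := by
  have hn0 : 0 < n := by omega
  have hc := spider_connected (n := n) hr hn0
  have : Nonempty (Fin n) := ⟨⟨0, hn0⟩⟩
  apply le_antisymm
  · obtain ⟨u, v, huv⟩ := (spider r n).exists_dist_eq_diam
    rw [← huv]
    obtain ⟨w1, h1, _⟩ := spider_walk hr hn0 u.1 u.2
    obtain ⟨w2, h2, _⟩ := spider_walk hr hn0 v.1 v.2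
    have := SimpleGraph.dist_le (w1.append w2.reverse)
    rw [SimpleGraph.Walk.length_append, SimpleGraph.Walk.length_reverse] at this
    exact this.trans (by omega)
  · have h := SimpleGraph.dist_le_diam (SimpleGraph.connected_iff_ediam_ne_top.1 hc)
      (u := ⟨r, by omega⟩) (v := ⟨2 * r, by omega⟩)
    refine le_trans ?_ h
    obtain ⟨w, hw⟩ := (hc ⟨r, by omega⟩ ⟨2 * r, by omega⟩).exists_walk_length_eq_dist
    rw [← hw]
    have := spider_lip w
    unfold phi at this
    simp only at this
    split_ifs at this <;> omega

lemma spider_leaf {r n : ℕ} (hr : 1 ≤ r) (hn : 2 * r + 1 ≤ n) {x : Fin n}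
    (hx : x ∈ leavesFinset (spider r n)) : x.1 = r ∨ x.1 = 2 * r ∨ 2 * r < x.1 := by
  unfold leavesFinset at hx
  rw [Finset.mem_filter, SimpleGraph.degree_eq_one_iff_existsUnique_adj] at hx
  have hu := hx.2
  by_contra hcon
  push Not at hcon
  obtain ⟨h1, h2, h3⟩ := hcon
  have hx1 : x.1 + 1 < n := by omega
  have hadj1 : (spider r n).Adj x ⟨x.1 + 1, hx1⟩ := by
    refine ⟨by simp [Fin.ext_iff], Or.inr ?_⟩
    simp only [par]; split_ifs <;> omega
  by_cases h0 : x.1 = 0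
  · have hadj2 : (spider r n).Adj x ⟨r + 1, by omega⟩ := by
      refine ⟨by simp [Fin.ext_iff]; omega, Or.inr ?_⟩
      simp [par, h0]
    have := hu.unique hadj1 hadj2
    simp [Fin.ext_iff] at this
    omega
  · have hp := par_le r x.1
    have hadj2 : (spider r n).Adj x ⟨par r x.1, by omega⟩ := by
      refine ⟨by simp [Fin.ext_iff]; omega, Or.inl rfl⟩
    have := hu.unique hadj1 hadj2
    simp [Fin.ext_iff] at this
    omega

lemma spider_energy {r n : ℕ} (h : ℕ → ℝ) :
    ∑ k ∈ Finset.range n, (h k - h (par r k)) ^ 2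
      ≤ dirichletEnergy (spider r n) (fun x => h x.1) := by
  unfold dirichletEnergy
  set A : Fin n → Fin n → ℝ := fun x y => if y.1 = par r x.1 then (h x.1 - h y.1) ^ 2 else 0
    with hA
  have hT : ∀ x y : Fin n, A x y + A y x ≤
      if (spider r n).Adj x y then (h x.1 - h y.1) ^ 2 else 0 := by
    intro x y
    by_cases hxy : x = y
    · subst hxy; simp [hA]
    · have hxy' : x.1 ≠ y.1 := fun h => hxy (Fin.ext h)
      have hpx := par_le r x.1
      have hpy := par_le r y.1
      have hadj : (spider r n).Adj x y ↔ (y.1 = par r x.1 ∨ x.1 = par r y.1) :=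
        ⟨fun h => h.2, fun h => ⟨hxy, h⟩⟩
      simp only [hA, hadj]
      by_cases h1 : y.1 = par r x.1
      · have h2 : ¬ x.1 = par r y.1 := by omega
        rw [if_pos h1, if_neg h2, if_pos (Or.inl h1)]; simp
      · by_cases h2 : x.1 = par r y.1
        · rw [if_neg h1, if_pos h2, if_pos (Or.inr h2)]
          apply le_of_eq; ring
        · rw [if_neg h1, if_neg h2, if_neg (by tauto)]; simp
  have hS : ∑ x : Fin n, ∑ y : Fin n, A x y = ∑ k ∈ Finset.range n, (h k - h (par r k)) ^ 2 := by
    rw [← Fin.sum_univ_eq_sum_range (fun k => (h k - h (par r k)) ^ 2) n]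
    refine Finset.sum_congr rfl fun x _ => ?_
    have hp := par_le r x.1
    rw [Finset.sum_eq_single (⟨par r x.1, by omega⟩ : Fin n)]
    · simp [hA]
    · intro b _ hb
      simp only [hA]
      rw [if_neg]
      intro h; exact hb (Fin.ext h)
    · simp
  have := Finset.sum_le_sum fun x (_ : x ∈ Finset.univ) =>
        Finset.sum_le_sum fun y (_ : y ∈ Finset.univ) => hT x y
  simp only [Finset.sum_add_distrib] at this
  rw [Finset.sum_comm (f := fun x y => A y x), hS] at this
  linarith

lemma spider_bound {r n : ℕ} (hr : 1 ≤ r) (hn : 2 * r + 1 ≤ n) (h : ℕ → ℝ) (h0 : h 0 = 0) :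
    ∑ x ∈ leavesFinset (spider r n), (h x.1) ^ 2 ≤
      r * dirichletEnergy (spider r n) (fun x => h x.1) := by
  have hr1 : (1 : ℝ) ≤ r := by exact_mod_cast hr
  refine le_trans ?_ (mul_le_mul_of_nonneg_left (spider_energy (r := r) (n := n) h) (by linarith))
  set g : ℕ → ℝ := fun k => h k - h (par r k) with hg
  have hB : ∑ x ∈ leavesFinset (spider r n), (h x.1) ^ 2 ≤
      (h r) ^ 2 + ((h (2 * r)) ^ 2 + ∑ k ∈ Finset.Ico (2 * r + 1) n, (h k) ^ 2) := by
    rw [← Finset.sum_image (f := fun k => (h k) ^ 2) (g := fun x : Fin n => x.1)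
      (fun _ _ _ _ h => Fin.ext h)]
    rw [← Finset.sum_insert (f := fun k => (h k) ^ 2) (by simp),
      ← Finset.sum_insert (f := fun k => (h k) ^ 2) (by simp; omega)]
    refine Finset.sum_le_sum_of_subset_of_nonneg ?_ (fun _ _ _ => sq_nonneg _)
    intro k hk
    obtain ⟨x, hx, rfl⟩ := Finset.mem_image.1 hk
    have := spider_leaf hr hn hx
    have := x.2
    simp only [Finset.mem_insert, Finset.mem_Ico]
    omega
  have t1 : ∀ k ≤ r, ∑ i ∈ Finset.range k, g (1 + i) = h k := by
    intro k
    induction k with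
    | zero => simp [h0]
    | succ k ih =>
      intro hk
      rw [Finset.sum_range_succ, ih (by omega)]
      have : par r (1 + k) = k := by unfold par; split_ifs <;> omega
      simp only [hg, this]
      rw [add_comm 1 k]; ring
  have t2 : ∀ k, k + 1 ≤ r → ∑ i ∈ Finset.range (k + 1), g (r + 1 + i) = h (r + (k + 1)) := by
    intro k
    induction k with
    | zero => intro _; simp [hg, par, h0]
    | succ k ih =>
      intro hk
      rw [Finset.sum_range_succ, ih (by omega)]
      have : par r (r + 1 + (k + 1)) = r + (k + 1) := by unfold par; split_ifs <;> omega
      simp only [hg, this]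
      rw [show r + 1 + (k + 1) = r + (k + 1 + 1) by ring]; ring
  have u1 : (h r) ^ 2 ≤ r * ∑ i ∈ Finset.range r, (g (1 + i)) ^ 2 := by
    rw [← t1 r le_rfl]
    simpa using sq_sum_le_card_mul_sum_sq (s := Finset.range r) (f := fun i => g (1 + i))
  have u2 : (h (2 * r)) ^ 2 ≤ r * ∑ i ∈ Finset.range r, (g (r + 1 + i)) ^ 2 := by
    have := t2 (r - 1) (by omega)
    rw [show r - 1 + 1 = r by omega] at this
    rw [two_mul, ← this]
    simpa using sq_sum_le_card_mul_sum_sq (s := Finset.range r) (f := fun i => g (r + 1 + i))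
  have u3 : ∑ k ∈ Finset.Ico (2 * r + 1) n, (h k) ^ 2 ≤
      r * ∑ k ∈ Finset.Ico (2 * r + 1) n, (g k) ^ 2 := by
    rw [Finset.mul_sum]
    refine Finset.sum_le_sum fun k hk => ?_
    have hk' := (Finset.mem_Ico.1 hk).1
    have : par r k = 0 := by unfold par; split_ifs <;> omega
    simp only [hg, this, h0, sub_zero]
    nlinarith [sq_nonneg (h k)]
  have hsplit : ∑ k ∈ Finset.range n, (g k) ^ 2 = (g 0) ^ 2 +
      (∑ i ∈ Finset.range r, (g (1 + i)) ^ 2 + (∑ i ∈ Finset.range r, (g (r + 1 + i)) ^ 2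
        + ∑ k ∈ Finset.Ico (2 * r + 1) n, (g k) ^ 2)) := by
    have e1 := Finset.sum_Ico_eq_sum_range (fun k => (g k) ^ 2) 1 (r + 1)
    have e2 := Finset.sum_Ico_eq_sum_range (fun k => (g k) ^ 2) (r + 1) (2 * r + 1)
    rw [show r + 1 - 1 = r by omega] at e1
    rw [show 2 * r + 1 - (r + 1) = r by omega] at e2
    rw [← e1, ← e2, Finset.sum_Ico_consecutive _ (by omega) (by omega),
      Finset.sum_Ico_consecutive _ (by omega) (by omega), Finset.range_eq_Ico,
      Finset.sum_eq_sum_Ico_succ_bot (by omega)]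
  have hg0 := sq_nonneg (g 0)
  change _ ≤ (r : ℝ) * ∑ k ∈ Finset.range n, (g k) ^ 2
  rw [hsplit]
  nlinarith

lemma energy_nonneg {V : Type*} [Fintype V] (G : SimpleGraph V) (f : V → ℝ) :
    0 ≤ dirichletEnergy G f := by
  unfold dirichletEnergy
  refine div_nonneg (Finset.sum_nonneg fun x _ => Finset.sum_nonneg fun y _ => ?_) (by norm_num)
  split_ifs <;> positivity

lemma tree_mem {n r : ℕ} (hr : 1 ≤ r) {G : SimpleGraph (Fin n)} (hG : G.IsTree)
    (hd : G.diam = 2 * r) :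
    ∃ F : Submodule ℝ (Fin n → ℝ),
    Module.finrank ℝ (F.map (LinearMap.funLeft ℝ ℝ
      (fun x : {v // v ∈ leavesFinset G} => (x : Fin n)))) = 2 ∧
    ∀ f ∈ F, dirichletEnergy G f ≤ (1 / (r : ℝ)) * ∑ x ∈ leavesFinset G, (f x) ^ 2 := by
  have := hG.connected.nonempty
  obtain ⟨u, v, huv⟩ := G.exists_dist_eq_diam
  have hne : u ≠ v := by rintro rfl; simp at huv; omega
  have hle : ∀ x y, G.dist x y ≤ G.dist u v := fun x y => by
    rw [huv]
    exact SimpleGraph.dist_le_diam (SimpleGraph.connected_iff_ediam_ne_top.1 hG.connected)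
  refine steklov_set_mem hG hr (huv.trans hd) (leaf_of_diam hG hne fun y => hle y v)
    (leaf_of_diam hG hne.symm fun y => ?_)
  rw [SimpleGraph.dist_comm (u := v)]
  exact hle y u

lemma steklov_le {n r : ℕ} (hr : 1 ≤ r) {G : SimpleGraph (Fin n)} (hG : G.IsTree)
    (hd : G.diam = 2 * r) : steklovEig G (leavesFinset G) 2 ≤ 1 / (r : ℝ) := by
  obtain ⟨c⟩ := hG.connected.nonempty
  refine csInf_le ⟨0, ?_⟩ (tree_mem hr hG hd)
  rintro t ⟨F, hF, h⟩
  obtain ⟨f, hf, -, hpos⟩ := exists_test c hF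
  by_contra ht
  push Not at ht
  have := h f hf
  have := energy_nonneg G f
  nlinarith

lemma spider_ge {n r : ℕ} (hr : 1 ≤ r) (hn : 2 * r + 1 ≤ n) :
    1 / (r : ℝ) ≤ steklovEig (spider r n) (leavesFinset (spider r n)) 2 := by
  have hr0 : (0 : ℝ) < r := by exact_mod_cast hr
  have hn0 : 0 < n := by omega
  refine le_csInf ⟨_, tree_mem hr (spider_isTree hr hn0) (spider_diam hr hn)⟩ ?_
  rintro t ⟨F, hF, h⟩
  obtain ⟨f, hf, hc, hpos⟩ := exists_test ⟨0, hn0⟩ hF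
  have h1 := h f hf
  have h2 := spider_bound hr hn (fun k => if hk : k < n then f ⟨k, hk⟩ else 0) (by simp [hn0, hc])
  simp only [Fin.is_lt, dite_true, Fin.eta] at h2
  rw [div_le_iff₀ hr0]
  by_contra hlt
  push Not at hlt
  have h3 := mul_le_mul_of_nonneg_left h1 hr0.le
  nlinarith

/-- Let `D = 2r` be an even integer with `r ≥ 1` and let `n ≥ D + 1` be an
integer. Then `σ̃_{2,max}(D,n) = 2/D = 1/r`. -/
theorem stmt6 (D r n : ℕ) (hr : 1 ≤ r) (hD : D = 2 * r) (hn : D + 1 ≤ n) :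
    sigmaTildeMax D n = 2 / (D : ℝ) ∧ sigmaTildeMax D n = 1 / (r : ℝ) := by
  subst hD
  have hr0 : (0 : ℝ) < r := by exact_mod_cast hr
  have hn0 : 0 < n := by omega
  have key : sigmaTildeMax (2 * r) n = 1 / (r : ℝ) := by
    refine IsGreatest.csSup_eq ⟨⟨spider r n, spider_isTree hr hn0, spider_diam hr hn, ?_⟩, ?_⟩
    · exact le_antisymm (spider_ge hr hn)
        (steklov_le hr (spider_isTree hr hn0) (spider_diam hr hn))
    · rintro s ⟨G, hG, hd, rfl⟩
      exact steklov_le hr hG hd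
  refine ⟨?_, key⟩
  rw [key]
  push_cast
  field_simp
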